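/- arXiv:0902.4743 — 7 statements merged into one kernel-verified Lean document; each statement's English description precedes it below -/
import Mathlib

section
/- In a coherent category E, every internal co-category is a co-equivalence relation: the morphisms l and r are jointly epimorphic, and there exists a morphism s : Q1 → Q1 satisfying s∘l = r, s∘r = l, [id, s]∘q = l∘i and [s, id]∘q = r∘i. -/
/-!
The coprojections `ν1`, `ν2` are split monomorphisms, and their union is all of `Q2`, because a
subobject containing both of them receives the pushout. Pulling this union back along `q` covers
`Q1` by the two parts where `q` takes values in `ν1` and in `ν2`. If `q x = ν1 y`, the left
co-unit law gives `x = l (i y)`, so the first part lies in the image of `l`; symmetrically, by the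
right co-unit law, the second lies in the image of `r`. Thus `Q1` is the union of `l` and `r`
(`CocatStruct.IsCocategory.isIso_of_factors`), and in particular `l` and `r` are jointly epic.

The co-inverse `s` exchanges `l` and `r`. Its graph is the union `R` in `Q1 ⨯ Q1` of the subobjects
`(l, r)` and `(r, l)`: the first projection `R ⟶ Q1` is monic, because `l x = r y` forces `x = y`
(apply `i`), and it contains `l` and `r`, so it is an isomorphism. The equations for `s` are then
checked on `l` and `r`.
-/

open CategoryTheory CategoryTheory.Limits

universe v u

/-- Data of an internal co-category in a category `E`. -/
structure CocatStruct (E : Type u) [Category.{v} E] where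
  Q0 : E
  Q1 : E
  Q2 : E
  l : Q0 ⟶ Q1
  r : Q0 ⟶ Q1
  i : Q1 ⟶ Q0
  ν1 : Q1 ⟶ Q2
  ν2 : Q1 ⟶ Q2
  q : Q1 ⟶ Q2

variable {E : Type u} [Category.{v} E]

/-- The axioms for an internal co-category. -/
structure CocatStruct.IsCocategory (C : CocatStruct E) : Prop where
  po : IsPushout C.r C.l C.ν1 C.ν2
  li : C.l ≫ C.i = 𝟙 C.Q0
  ri : C.r ≫ C.i = 𝟙 C.Q0
  ql : C.l ≫ C.q = C.l ≫ C.ν1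
  qr : C.r ≫ C.q = C.r ≫ C.ν2
  counit_left : ∀ u : C.Q2 ⟶ C.Q1, C.ν1 ≫ u = C.i ≫ C.l → C.ν2 ≫ u = 𝟙 C.Q1 →
    C.q ≫ u = 𝟙 C.Q1
  counit_right : ∀ u : C.Q2 ⟶ C.Q1, C.ν1 ≫ u = 𝟙 C.Q1 → C.ν2 ≫ u = C.i ≫ C.r →
    C.q ≫ u = 𝟙 C.Q1
  coassoc : ∀ {Q3 : E} (μ1 μ2 μ3 : C.Q1 ⟶ Q3) (j12 j23 u v : C.Q2 ⟶ Q3),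
    C.ν1 ≫ j12 = μ1 → C.ν2 ≫ j12 = μ2 →
    C.ν1 ≫ j23 = μ2 → C.ν2 ≫ j23 = μ3 →
    C.ν1 ≫ u = C.q ≫ j12 → C.ν2 ≫ u = μ3 →
    C.ν1 ≫ v = μ1 → C.ν2 ≫ v = C.q ≫ j23 →
    C.q ≫ u = C.q ≫ v

/-- Two parallel morphisms are jointly epimorphic. -/
def JointlyEpi {X Y : E} (f g : X ⟶ Y) : Prop :=
  ∀ {Z : E} (u v : Y ⟶ Z), f ≫ u = f ≫ v → g ≫ u = g ≫ v → u = v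

/-- A coherent category: finite limits, pullback-stable (strong-epi/mono) images, and
pullback-stable unions of subobjects. -/
class CoherentCategory (E : Type u) [Category.{v} E] extends HasFiniteLimits E : Prop where
  exists_image : ∀ {X Y : E} (f : X ⟶ Y), ∃ (I : E) (e : X ⟶ I) (m : I ⟶ Y),
    StrongEpi e ∧ Mono m ∧ e ≫ m = f
  strongEpi_pullback : ∀ {P X Y Z : E} {fst : P ⟶ X} {snd : P ⟶ Y} {f : X ⟶ Z} {g : Y ⟶ Z},
    IsPullback fst snd f g → StrongEpi g → StrongEpi fst
  exists_union : ∀ {X : E} (a b : Subobject X), ∃ c : Subobject X,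
    a ≤ c ∧ b ≤ c ∧ ∀ d : Subobject X, a ≤ d → b ≤ d → c ≤ d
  union_pullback : ∀ {X Y : E} (f : Y ⟶ X) (a b c : Subobject X),
    a ≤ c → b ≤ c → (∀ d : Subobject X, a ≤ d → b ≤ d → c ≤ d) →
    ∀ d : Subobject Y, (Subobject.pullback f).obj a ≤ d → (Subobject.pullback f).obj b ≤ d →
      (Subobject.pullback f).obj c ≤ d

/-- Stability of unions in terms of generalized elements: if `f` factors through the union `c` of
`a` and `b`, then a subobject `m` of the domain of `f` is everything as soon as it contains all
generalized elements that `f` sends into `a` or into `b`. -/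
lemma isIso_of_union [CoherentCategory E] {X A B T M : E} (a : A ⟶ X) (b : B ⟶ X) [Mono a] [Mono b]
    (c : Subobject X) (hac : Subobject.mk a ≤ c) (hbc : Subobject.mk b ≤ c)
    (hc : ∀ d : Subobject X, Subobject.mk a ≤ d → Subobject.mk b ≤ d → c ≤ d)
    (f : T ⟶ X) (hf : c.Factors f) (m : M ⟶ T) [Mono m]
    (ha : ∀ {S : E} (t : S ⟶ T) (x : S ⟶ A), x ≫ a = t ≫ f → ∃ k, k ≫ m = t)
    (hb : ∀ {S : E} (t : S ⟶ T) (x : S ⟶ B), x ≫ b = t ≫ f → ∃ k, k ≫ m = t) :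
    IsIso m := by
  have key : ∀ {D : E} (e : D ⟶ X) [Mono e],
      (∀ {S : E} (t : S ⟶ T) (x : S ⟶ D), x ≫ e = t ≫ f → ∃ k, k ≫ m = t) →
      (Subobject.pullback f).obj (Subobject.mk e) ≤ Subobject.mk m := by
    intro D e _ he
    have sq := Subobject.isPullback f (Subobject.mk e)
    obtain ⟨k, hk⟩ := he ((Subobject.pullback f).obj (Subobject.mk e)).arrow
      (Subobject.pullbackπ f (Subobject.mk e) ≫ (Subobject.underlyingIso e).hom)
      (by simpa using sq.w)
    exact Subobject.le_mk_of_comm k hk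
  have h1 := CoherentCategory.union_pullback f _ _ c hac hbc hc (Subobject.mk m)
    (key a ha) (key b hb)
  have sq := Subobject.isPullback f c
  -- The identity of `T` lies in the pullback of `c` along `f`, hence in `m`.
  let g := sq.lift (c.factorThru f hf) (𝟙 T) (by simp)
  have hg : (g ≫ Subobject.ofLEMk _ m h1) ≫ m = 𝟙 T := by
    rw [Category.assoc, Subobject.ofLEMk_comp]
    exact sq.lift_snd _ _ _
  exact ⟨_, by rw [← cancel_mono m, Category.assoc, hg]; simp, hg⟩

/-- Two morphisms out of `T` agree if they agree on all generalized elements of `T` sent into `a`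
or into `b` by some `f` that factors through the union of `a` and `b`. -/
lemma ext_of_union [CoherentCategory E] {X A B T Z : E} (a : A ⟶ X) (b : B ⟶ X) [Mono a] [Mono b]
    (c : Subobject X) (hac : Subobject.mk a ≤ c) (hbc : Subobject.mk b ≤ c)
    (hc : ∀ d : Subobject X, Subobject.mk a ≤ d → Subobject.mk b ≤ d → c ≤ d)
    (f : T ⟶ X) (hf : c.Factors f) (u v : T ⟶ Z)
    (ha : ∀ {S : E} (t : S ⟶ T) (x : S ⟶ A), x ≫ a = t ≫ f → t ≫ u = t ≫ v)
    (hb : ∀ {S : E} (t : S ⟶ T) (x : S ⟶ B), x ≫ b = t ≫ f → t ≫ u = t ≫ v) :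
    u = v := by
  have := isIso_of_union a b c hac hbc hc f hf (equalizer.ι u v)
    (fun t x hx => ⟨equalizer.lift t (ha t x hx), equalizer.lift_ι _ _⟩)
    (fun t x hx => ⟨equalizer.lift t (hb t x hx), equalizer.lift_ι _ _⟩)
  exact (cancel_epi (equalizer.ι u v)).1 (equalizer.condition u v)

namespace CocatStruct.IsCocategory

/-- The object `Q1` is the union of `l` and `r`: a subobject containing both is everything. -/
lemma isIso_of_factors [CoherentCategory E] {C : CocatStruct E} (h : C.IsCocategory)
    {M : E} (m : M ⟶ C.Q1) [Mono m] (l' r' : C.Q0 ⟶ M) (hl : l' ≫ m = C.l) (hr : r' ≫ m = C.r) :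
    IsIso m := by
  have w1 : C.r ≫ 𝟙 C.Q1 = C.l ≫ C.i ≫ C.r := by rw [← Category.assoc, h.li]; simp
  have w2 : C.r ≫ C.i ≫ C.l = C.l ≫ 𝟙 C.Q1 := by rw [← Category.assoc, h.ri]; simp
  -- `ρ` and `lam` are the two maps `Q2 ⟶ Q1` that appear in the co-unit laws.
  obtain ⟨ρ, hρ1, hρ2⟩ : ∃ u : C.Q2 ⟶ C.Q1, C.ν1 ≫ u = 𝟙 _ ∧ C.ν2 ≫ u = C.i ≫ C.r :=
    ⟨h.po.desc _ _ w1, h.po.inl_desc _ _ _, h.po.inr_desc _ _ _⟩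
  obtain ⟨lam, hlam1, hlam2⟩ : ∃ u : C.Q2 ⟶ C.Q1, C.ν1 ≫ u = C.i ≫ C.l ∧ C.ν2 ≫ u = 𝟙 _ :=
    ⟨h.po.desc _ _ w2, h.po.inl_desc _ _ _, h.po.inr_desc _ _ _⟩
  have qρ := h.counit_right ρ hρ1 hρ2
  have qlam := h.counit_left lam hlam1 hlam2
  have : Mono C.ν1 := mono_of_mono_fac hρ1
  have : Mono C.ν2 := mono_of_mono_fac hlam2
  refine isIso_of_union C.ν1 C.ν2 ⊤ le_top le_top ?_ C.q (Subobject.top_factors _) m ?_ ?_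
  · intro d h1 h2
    -- The pushout property provides a section of the inclusion of `d`.
    let σ : C.Q2 ⟶ (d : E) := h.po.desc (Subobject.ofMkLE _ d h1) (Subobject.ofMkLE _ d h2)
      (by rw [← cancel_mono d.arrow]; simpa using h.po.w)
    have hσ : σ ≫ d.arrow = 𝟙 _ := by
      apply h.po.hom_ext <;> simp [σ]
    exact Subobject.le_of_comm ((⊤ : Subobject C.Q2).arrow ≫ σ) (by simp [hσ])
  · intro S t x hx
    have e2 : x ≫ C.i ≫ C.l = t := by
      simpa [hlam1, qlam] using congrArg (· ≫ lam) hx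
    exact ⟨x ≫ C.i ≫ l', by simp [hl, e2]⟩
  · intro S t x hx
    have e1 : x ≫ C.i ≫ C.r = t := by
      simpa [hρ2, qρ] using congrArg (· ≫ ρ) hx
    exact ⟨x ≫ C.i ≫ r', by simp [hr, e1]⟩

lemma jointlyEpi [CoherentCategory E] {C : CocatStruct E} (h : C.IsCocategory) :
    JointlyEpi C.l C.r := by
  intro Z u v hl hr
  have := h.isIso_of_factors (equalizer.ι u v) (equalizer.lift C.l hl) (equalizer.lift C.r hr)
    (equalizer.lift_ι _ _) (equalizer.lift_ι _ _)
  exact (cancel_epi (equalizer.ι u v)).1 (equalizer.condition u v)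

lemma exists_swap [CoherentCategory E] {C : CocatStruct E} (h : C.IsCocategory) :
    ∃ s : C.Q1 ⟶ C.Q1, C.l ≫ s = C.r ∧ C.r ≫ s = C.l := by
  have : Mono C.l := mono_of_mono_fac h.li
  have : Mono C.r := mono_of_mono_fac h.ri
  let a : C.Q0 ⟶ C.Q1 ⨯ C.Q1 := prod.lift C.l C.r
  let b : C.Q0 ⟶ C.Q1 ⨯ C.Q1 := prod.lift C.r C.l
  have a1 : a ≫ prod.fst = C.l := prod.lift_fst _ _
  have a2 : a ≫ prod.snd = C.r := prod.lift_snd _ _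
  have b1 : b ≫ prod.fst = C.r := prod.lift_fst _ _
  have b2 : b ≫ prod.snd = C.l := prod.lift_snd _ _
  have : Mono a := mono_of_mono_fac a1
  have : Mono b := mono_of_mono_fac b1
  obtain ⟨c, hac, hbc, hc⟩ := CoherentCategory.exists_union (Subobject.mk a) (Subobject.mk b)
  -- `l` and `r` meet only along their equalizer.
  have meet : ∀ {S : E} (x y : S ⟶ C.Q0), x ≫ C.l = y ≫ C.r → x = y := by
    intro S x y hxy
    simpa [h.li, h.ri] using congrArg (· ≫ C.i) hxy
  have : Mono (c.arrow ≫ prod.fst) := by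
    constructor
    intro T u v huv
    rw [← cancel_mono c.arrow]
    have hfst : (u ≫ c.arrow) ≫ prod.fst = (v ≫ c.arrow) ≫ prod.fst := by simpa using huv
    apply Limits.prod.hom_ext hfst
    -- Split according to the half of the union containing `u`, then the one containing `v`.
    apply ext_of_union a b c hac hbc hc (u ≫ c.arrow) (Subobject.factors_comp_arrow u)
    all_goals
      intro S t x hx
      apply ext_of_union a b c hac hbc hc ((t ≫ v) ≫ c.arrow) (Subobject.factors_comp_arrow _)
    all_goals
      intro S' t' x' hx'
      have f1 := congrArg (fun z => t' ≫ z ≫ prod.fst) hx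
      have f2 := congrArg (fun z => t' ≫ z ≫ prod.snd) hx
      have g1 := congrArg (· ≫ prod.fst) hx'
      have g2 := congrArg (· ≫ prod.snd) hx'
      have hh := congrArg (fun z => t' ≫ t ≫ z) hfst
      simp only [Category.assoc, a1, a2, b1, b2] at f1 f2 g1 g2 hh ⊢
      have e := f1.trans (hh.trans g1.symm)
      rw [← f2, ← g2]
    · rw [← Category.assoc, cancel_mono] at e
      rw [← Category.assoc, e]
    · rw [← Category.assoc] at e ⊢
      obtain rfl := meet _ _ e
      exact e.symm
    · rw [← Category.assoc] at e ⊢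
      obtain rfl := meet _ _ e.symm
      exact e.symm
    · rw [← Category.assoc, cancel_mono] at e
      rw [← Category.assoc, e]
  have ha : Subobject.ofMkLE a c hac ≫ c.arrow = a := Subobject.ofMkLE_arrow hac
  have hb : Subobject.ofMkLE b c hbc ≫ c.arrow = b := Subobject.ofMkLE_arrow hbc
  have := h.isIso_of_factors (c.arrow ≫ prod.fst) (Subobject.ofMkLE a c hac)
    (Subobject.ofMkLE b c hbc) (by rw [reassoc_of% ha, a1]) (by rw [reassoc_of% hb, b1])
  have hl : Subobject.ofMkLE a c hac = C.l ≫ inv (c.arrow ≫ prod.fst) := by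
    rw [IsIso.eq_comp_inv, reassoc_of% ha, a1]
  have hr : Subobject.ofMkLE b c hbc = C.r ≫ inv (c.arrow ≫ prod.fst) := by
    rw [IsIso.eq_comp_inv, reassoc_of% hb, b1]
  refine ⟨inv (c.arrow ≫ prod.fst) ≫ c.arrow ≫ prod.snd, ?_, ?_⟩
  · rw [← Category.assoc, ← hl, reassoc_of% ha, a2]
  · rw [← Category.assoc, ← hr, reassoc_of% hb, b2]

end CocatStruct.IsCocategory

/-- In a coherent category, every internal co-category is a co-equivalence relation:
`l` and `r` are jointly epimorphic, and there is a co-inverse `s` satisfying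
`s ∘ l = r`, `s ∘ r = l`, `[id, s] ∘ q = l ∘ i` and `[s, id] ∘ q = r ∘ i`. -/
theorem cocategory_isCoequivalenceRelation [CoherentCategory E]
    (C : CocatStruct E) (h : C.IsCocategory) :
    JointlyEpi C.l C.r ∧
    ∃ s : C.Q1 ⟶ C.Q1, C.l ≫ s = C.r ∧ C.r ≫ s = C.l ∧
      (∀ u : C.Q2 ⟶ C.Q1, C.ν1 ≫ u = 𝟙 C.Q1 → C.ν2 ≫ u = s →
        C.q ≫ u = C.i ≫ C.l) ∧
      (∀ u : C.Q2 ⟶ C.Q1, C.ν1 ≫ u = s → C.ν2 ≫ u = 𝟙 C.Q1 →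
        C.q ≫ u = C.i ≫ C.r) := by
  refine ⟨h.jointlyEpi, ?_⟩
  obtain ⟨s, hl, hr⟩ := h.exists_swap
  refine ⟨s, hl, hr, fun u h1 h2 => h.jointlyEpi _ _ ?_ ?_, fun u h1 h2 => h.jointlyEpi _ _ ?_ ?_⟩
  · rw [reassoc_of% h.ql, h1, reassoc_of% h.li, Category.comp_id]
  · rw [reassoc_of% h.qr, h2, reassoc_of% h.ri, hr]
  · rw [reassoc_of% h.ql, h1, reassoc_of% h.li, hl]
  · rw [reassoc_of% h.qr, h2, reassoc_of% h.ri, Category.comp_id]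
end

section
/- In a coherent category E, for every internal co-category Q, the morphisms l, r : Q0 → Q1 are jointly epimorphic; that is, every co-category in a coherent category is a co-preorder. -/
/-!
A generalized element `x` of `Q1` has `q x` in the union of the images of `ν1` and `ν2`, because
these two subobjects of the pushout `Q2` cover it; by stability of unions, `Q1` is covered by the
pullbacks along `q` of `ν1` and `ν2`. If `q x = ν1 y`, then applying the retraction `[id, r i]` of
`ν1` gives `x = y` by the right co-unit law, and applying `[l i, id]` to `q x = ν1 x` gives
`x = l (i x)` by the left one. Symmetrically, `q x = ν2 y` forces `x = r (i x)`. Hence `Q1` is the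
union of the subobjects `l` and `r`, and the equalizer of two maps that agree on both is all
of `Q1`.
-/

open CategoryTheory CategoryTheory.Limits

universe v u

variable {E : Type u} [Category.{v} E]

/-- The legs of a pushout are jointly extremal epimorphic: a subobject that contains both of them
is everything. -/
lemma top_le_of_isPushout {W X Y P : E} {f : W ⟶ X} {g : W ⟶ Y} {a : X ⟶ P} {b : Y ⟶ P}
    (po : IsPushout f g a b) (d : Subobject P) (ha : d.Factors a) (hb : d.Factors b) :
    ⊤ ≤ d := by
  have hw : f ≫ d.factorThru a ha = g ≫ d.factorThru b hb := by
    rw [← cancel_mono d.arrow]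
    simpa using po.w
  have hs : po.desc _ _ hw ≫ d.arrow = 𝟙 P := by
    apply po.hom_ext <;> simp
  have : IsSplitEpi d.arrow := ⟨⟨⟨_, hs⟩⟩⟩
  have : IsIso d.arrow := isIso_of_mono_of_isSplitEpi d.arrow
  exact (Subobject.eq_top_of_isIso_arrow d).ge

/-- In a coherent category, for every internal co-category the maps `l, r : Q0 ⟶ Q1`
are jointly epimorphic; i.e. every co-category in a coherent category is a co-preorder. -/
theorem cocategory_isCopreorder [CoherentCategory E]
    (C : CocatStruct E) (h : C.IsCocategory) :
    JointlyEpi C.l C.r := by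
  intro Z u v hl hr
  -- `s = [l i, id]` and `t = [id, r i]` are the maps of the two co-unit laws.
  obtain ⟨s, hs1, hs2⟩ : ∃ s : C.Q2 ⟶ C.Q1, C.ν1 ≫ s = C.i ≫ C.l ∧ C.ν2 ≫ s = 𝟙 _ :=
    ⟨h.po.desc (C.i ≫ C.l) (𝟙 _) (by simp [reassoc_of% h.ri]), by simp, by simp⟩
  obtain ⟨t, ht1, ht2⟩ : ∃ t : C.Q2 ⟶ C.Q1, C.ν1 ≫ t = 𝟙 _ ∧ C.ν2 ≫ t = C.i ≫ C.r :=
    ⟨h.po.desc (𝟙 _) (C.i ≫ C.r) (by simp [reassoc_of% h.li]), by simp, by simp⟩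
  have hqs := h.counit_left s hs1 hs2
  have hqt := h.counit_right t ht1 ht2
  have : Mono C.ν1 := mono_of_mono_fac ht1
  have : Mono C.ν2 := mono_of_mono_fac hs2
  have key : (Subobject.pullback C.q).obj ⊤ ≤ Subobject.mk (equalizer.ι u v) := by
    refine CoherentCategory.union_pullback C.q (Subobject.mk C.ν1) (Subobject.mk C.ν2) ⊤
      le_top le_top (fun d h1 h2 => ?_) _ ?_ ?_
    · exact top_le_of_isPushout h.po d
        (Subobject.factors_of_le _ h1 (Subobject.mk_factors_self _))
        (Subobject.factors_of_le _ h2 (Subobject.mk_factors_self _))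
    · set p := ((Subobject.pullback C.q).obj (Subobject.mk C.ν1)).arrow with hp
      obtain ⟨y, hy⟩ : ∃ y, y ≫ C.ν1 = p ≫ C.q :=
        ⟨Subobject.pullbackπ C.q _ ≫ (Subobject.underlyingIso C.ν1).hom, by
          simpa using (Subobject.isPullback C.q (Subobject.mk C.ν1)).w⟩
      have e1 : y = p := by
        simpa [ht1, hqt] using congrArg (· ≫ t) hy
      have e2 : p ≫ C.i ≫ C.l = p := by
        simpa [hs1, hqs, e1] using congrArg (· ≫ s) hy
      have e3 : p ≫ u = p ≫ v := by
        rw [← e2]; simp [hl]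
      exact Subobject.le_mk_of_comm (equalizer.lift p e3) (by simp [hp])
    · set p := ((Subobject.pullback C.q).obj (Subobject.mk C.ν2)).arrow with hp
      obtain ⟨y, hy⟩ : ∃ y, y ≫ C.ν2 = p ≫ C.q :=
        ⟨Subobject.pullbackπ C.q _ ≫ (Subobject.underlyingIso C.ν2).hom, by
          simpa using (Subobject.isPullback C.q (Subobject.mk C.ν2)).w⟩
      have e1 : y = p := by
        simpa [hs2, hqs] using congrArg (· ≫ s) hy
      have e2 : p ≫ C.i ≫ C.r = p := by
        simpa [ht2, hqt, e1] using congrArg (· ≫ t) hy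
      have e3 : p ≫ u = p ≫ v := by
        rw [← e2]; simp [hr]
      exact Subobject.le_mk_of_comm (equalizer.lift p e3) (by simp [hp])
  rw [Subobject.pullback_top, top_le_iff] at key
  have : IsIso (equalizer.ι u v) := (Subobject.isIso_iff_mk_eq_top _).2 key
  exact eq_of_epi_equalizer
end

section
/- Let Q be an internal co-category in a category E. If (P1, m1, q1) is a pullback of ν1 : Q1 → Q2 along q : Q1 → Q2 (so m1, q1 : P1 → Q1 with q∘m1 = ν1∘q1), then m1 = l∘i∘q1. Dually, if (P2, m2, q2) is a pullback of ν2 along q, then m2 = r∘i∘q2. -/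
open CategoryTheory CategoryTheory.Limits

universe v u

variable {E : Type u} [Category.{v} E]

/-- If `(P1, m1, q1)` is a pullback of `ν1` along `q` then `m1 = l ∘ i ∘ q1`; dually,
if `(P2, m2, q2)` is a pullback of `ν2` along `q` then `m2 = r ∘ i ∘ q2`. -/
theorem pullback_coprojection_eq (C : CocatStruct E) (h : C.IsCocategory) :
    (∀ {P1 : E} (m1 q1 : P1 ⟶ C.Q1), IsPullback m1 q1 C.q C.ν1 → m1 = q1 ≫ C.i ≫ C.l) ∧
    (∀ {P2 : E} (m2 q2 : P2 ⟶ C.Q1), IsPullback m2 q2 C.q C.ν2 → m2 = q2 ≫ C.i ≫ C.r) := by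
  -- Compose the pullback square with the comparison map `[l ∘ i, id]` (resp. `[id, r ∘ i]`),
  -- which retracts `q` by the co-unit law.
  refine ⟨fun m1 q1 hP => ?_, fun m2 q2 hP => ?_⟩
  · have w : C.r ≫ C.i ≫ C.l = C.l ≫ 𝟙 C.Q1 := by
      rw [← Category.assoc, h.ri, Category.id_comp, Category.comp_id]
    have hq := h.counit_left (h.po.desc _ _ w) (h.po.inl_desc _ _ w) (h.po.inr_desc _ _ w)
    rw [← Category.comp_id m1, ← hq, ← Category.assoc, hP.w, Category.assoc, h.po.inl_desc]
  · have w : C.r ≫ 𝟙 C.Q1 = C.l ≫ C.i ≫ C.r := by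
      rw [← Category.assoc, h.li, Category.id_comp, Category.comp_id]
    have hq := h.counit_right (h.po.desc _ _ w) (h.po.inl_desc _ _ w) (h.po.inr_desc _ _ w)
    rw [← Category.comp_id m2, ← hq, ← Category.assoc, hP.w, Category.assoc, h.po.inr_desc]
end

section
/- In a coherent category E, every co-preorder is a co-equivalence relation: if Q is an internal co-category whose structure maps l, r : Q0 → Q1 are jointly epimorphic, then there exists a morphism s : Q1 → Q1 with s∘l = r and s∘r = l. -/
/-!
Write `L`, `R` for the subobjects `l`, `r` of `Q1` (split monos, with retraction `i`).

*They cover `Q1`.* The coprojections `ν1`, `ν2` of the pushout `Q2` cover `Q2`, so their pullbacks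
along `q` cover `Q1`. Where `q x = ν1 y`, the right co-unit law gives `x = y`, and then the left
co-unit law gives `x = l (i x)`; symmetrically, where `q x = ν2 y`, one gets `x = r (i x)`.
Hence `L ∪ R = Q1` (`jointlyCover_l_r`).

*Gluing.* Let `G ≤ Q1 × Q1` be the union of the images of `(l, r)` and `(r, l)`; it is the graph of
the desired `s`. The first projection `G ⟶ Q1` is a strong epi since its image contains
`L` and `R`. It is a mono: this can be checked on the four pieces arising from the cover of `G`, and
if `l a = r b` then `a = b` by applying `i`, so `(l a, r a) = (r b, l b)`. So the projection is an
isomorphism, and `s` is its inverse followed by the second projection.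
-/


open CategoryTheory CategoryTheory.Limits

universe v u

variable {E : Type u} [Category.{v} E]

/-- Two morphisms into `X` jointly cover `X`: every subobject of `X` through which both factor is
the whole of `X`. -/
def JointlyCover {A B X : E} (m : A ⟶ X) (n : B ⟶ X) : Prop :=
  ∀ d : Subobject X, d.Factors m → d.Factors n → d = ⊤

/-- A pullback of a subobject `mk m` along `f` lies below `d` as soon as `d` contains every
generalized element whose image under `f` comes from `m`. -/
lemma pullback_mk_le [HasFiniteLimits E] {A X T : E} (m : A ⟶ X) [Mono m] (f : T ⟶ X)
    (d : Subobject T)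
    (hd : ∀ {S : E} (t : S ⟶ T) (a : S ⟶ A), t ≫ f = a ≫ m → d.Factors t) :
    (Subobject.pullback f).obj (Subobject.mk m) ≤ d := by
  have hf := hd ((Subobject.pullback f).obj (Subobject.mk m)).arrow
    (Subobject.pullbackπ f (Subobject.mk m) ≫ (Subobject.underlyingIso m).hom) (by
      rw [← (Subobject.isPullback f (Subobject.mk m)).w]
      simp)
  exact Subobject.le_of_comm (d.factorThru _ hf) (by simp)

/-- Covers are stable under pullback: membership in a subobject of `T` may be checked locally over
a cover of `X`, for any `f : T ⟶ X`. -/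
lemma JointlyCover.eq_top [CoherentCategory E] {A B X T : E} {m : A ⟶ X} {n : B ⟶ X}
    [Mono m] [Mono n] (hc : JointlyCover m n) (f : T ⟶ X) (d : Subobject T)
    (hm : ∀ {S : E} (t : S ⟶ T) (a : S ⟶ A), t ≫ f = a ≫ m → d.Factors t)
    (hn : ∀ {S : E} (t : S ⟶ T) (b : S ⟶ B), t ≫ f = b ≫ n → d.Factors t) : d = ⊤ := by
  have key := CoherentCategory.union_pullback f (Subobject.mk m) (Subobject.mk n) ⊤ le_top le_top
    (fun d' h1 h2 => (hc d'
      (Subobject.factors_of_le m h1 (Subobject.mk_factors_self m))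
      (Subobject.factors_of_le n h2 (Subobject.mk_factors_self n))).ge) d
    (pullback_mk_le m f d hm) (pullback_mk_le n f d hn)
  rw [Subobject.pullback_top] at key
  exact top_le_iff.mp key

/-- Equality of morphisms out of `T` may be checked locally over a cover of `X`. -/
lemma JointlyCover.hom_ext [CoherentCategory E] {A B X T Z : E} {m : A ⟶ X} {n : B ⟶ X}
    [Mono m] [Mono n] (hc : JointlyCover m n) (f : T ⟶ X) (u v : T ⟶ Z)
    (hm : ∀ {S : E} (t : S ⟶ T) (a : S ⟶ A), t ≫ f = a ≫ m → t ≫ u = t ≫ v)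
    (hn : ∀ {S : E} (t : S ⟶ T) (b : S ⟶ B), t ≫ f = b ≫ n → t ≫ u = t ≫ v) : u = v := by
  have htop : equalizerSubobject u v = ⊤ :=
    hc.eq_top f _
      (fun t a ht => (equalizerSubobject_factors_iff u v t).mpr (hm t a ht))
      (fun t b ht => (equalizerSubobject_factors_iff u v t).mpr (hn t b ht))
  have hid := (equalizerSubobject_factors_iff u v (𝟙 T)).mp (htop ▸ Subobject.top_factors _)
  simpa using hid

/-- A subobject of a pushout containing both coprojections has a section of its inclusion. -/
lemma jointlyCover_of_isPushout {W A B X : E} {f : W ⟶ A} {g : W ⟶ B} {m : A ⟶ X} {n : B ⟶ X}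
    (h : IsPushout f g m n) : JointlyCover m n := by
  intro d hm hn
  let s : X ⟶ (d : E) := h.desc (d.factorThru m hm) (d.factorThru n hn) (by
    rw [← cancel_mono d.arrow]; simp [h.w])
  have hs : s ≫ d.arrow = 𝟙 X := by
    apply h.hom_ext <;> simp [s]
  have : IsSplitEpi d.arrow := ⟨⟨s, hs⟩⟩
  have : IsIso d.arrow := isIso_of_mono_of_isSplitEpi _
  exact Subobject.eq_top_of_isIso_arrow d

namespace CocatStruct.IsCocategory

lemma mono_l {C : CocatStruct E} (h : C.IsCocategory) : Mono C.l :=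
  mono_of_mono_fac h.li

lemma mono_r {C : CocatStruct E} (h : C.IsCocategory) : Mono C.r :=
  mono_of_mono_fac h.ri

/-- In a coherent category, `Q1` is the union of its two co-points `l` and `r`. -/
lemma jointlyCover_l_r [CoherentCategory E] {C : CocatStruct E} (h : C.IsCocategory) :
    JointlyCover C.l C.r := by
  intro d hl hr
  obtain ⟨u, hu1, hu2⟩ : ∃ u, C.ν1 ≫ u = C.i ≫ C.l ∧ C.ν2 ≫ u = 𝟙 C.Q1 :=
    ⟨h.po.desc (C.i ≫ C.l) (𝟙 _) (by rw [← Category.assoc, h.ri]; simp), by simp, by simp⟩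
  obtain ⟨v, hv1, hv2⟩ : ∃ v, C.ν1 ≫ v = 𝟙 C.Q1 ∧ C.ν2 ≫ v = C.i ≫ C.r :=
    ⟨h.po.desc (𝟙 _) (C.i ≫ C.r) (by rw [← Category.assoc, h.li]; simp), by simp, by simp⟩
  have hqu := h.counit_left u hu1 hu2
  have hqv := h.counit_right v hv1 hv2
  have : Mono C.ν1 := mono_of_mono_fac hv1
  have : Mono C.ν2 := mono_of_mono_fac hu2
  refine (jointlyCover_of_isPushout h.po).eq_top C.q d ?_ ?_
  · intro S t a ht
    have h1 : t = a := by simpa [hqv, hv1] using congrArg (· ≫ v) ht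
    have h2 : t = a ≫ C.i ≫ C.l := by simpa [hqu, hu1] using congrArg (· ≫ u) ht
    rw [h2, ← Category.assoc]
    exact Subobject.factors_of_factors_right _ hl
  · intro S t b ht
    have h1 : t = b := by simpa [hqu, hu2] using congrArg (· ≫ u) ht
    have h2 : t = b ≫ C.i ≫ C.r := by simpa [hqv, hv2] using congrArg (· ≫ v) ht
    rw [h2, ← Category.assoc]
    exact Subobject.factors_of_factors_right _ hr

end CocatStruct.IsCocategory

/-- Existence of unions, phrased with `JointlyCover`: two monos into `X` factor through a subobject
that they jointly cover. -/
lemma exists_jointlyCover [CoherentCategory E] {A B X : E} (m : A ⟶ X) (n : B ⟶ X)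
    [Mono m] [Mono n] : ∃ (G : E) (g : G ⟶ X) (m' : A ⟶ G) (n' : B ⟶ G),
      Mono g ∧ m' ≫ g = m ∧ n' ≫ g = n ∧ JointlyCover m' n' := by
  obtain ⟨c, hm, hn, hc⟩ := CoherentCategory.exists_union (Subobject.mk m) (Subobject.mk n)
  have hm' : c.Factors m := Subobject.factors_of_le m hm (Subobject.mk_factors_self m)
  have hn' : c.Factors n := Subobject.factors_of_le n hn (Subobject.mk_factors_self n)
  refine ⟨(c : E), c.arrow, c.factorThru m hm', c.factorThru n hn', inferInstance,
    by simp, by simp, ?_⟩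
  intro d hdm hdn
  have hle : c ≤ Subobject.mk (d.arrow ≫ c.arrow) := hc _
    (Subobject.mk_le_mk_of_comm (d.factorThru _ hdm) (by simp))
    (Subobject.mk_le_mk_of_comm (d.factorThru _ hdn) (by simp))
  -- The inclusion `c ≤ d` provides a section of `d.arrow`.
  have hs : (Subobject.ofLEMk c _ hle) ≫ d.arrow = 𝟙 _ := by
    rw [← cancel_mono c.arrow]; simp
  have : IsSplitEpi d.arrow := ⟨⟨_, hs⟩⟩
  have : IsIso d.arrow := isIso_of_mono_of_isSplitEpi _
  exact Subobject.eq_top_of_isIso_arrow d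

/-- In a coherent category, a morphism whose image contains a cover is a strong epi. -/
lemma JointlyCover.strongEpi [CoherentCategory E] {A B X G : E} {m : A ⟶ X} {n : B ⟶ X}
    (hc : JointlyCover m n) (p : G ⟶ X) (m' : A ⟶ G) (n' : B ⟶ G)
    (hm : m' ≫ p = m) (hn : n' ≫ p = n) : StrongEpi p := by
  obtain ⟨I, e, j, he, hj, hej⟩ := CoherentCategory.exists_image p
  have htop : Subobject.mk j = ⊤ := hc _
    ((Subobject.mk_factors_iff j m).mpr ⟨m' ≫ e, by simp [hej, hm]⟩)
    ((Subobject.mk_factors_iff j n).mpr ⟨n' ≫ e, by simp [hej, hn]⟩)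
  have : IsIso j := (Subobject.isIso_iff_mk_eq_top j).mpr htop
  rw [← hej]
  exact strongEpi_comp e j

/-- In a coherent category, every co-preorder is a co-equivalence relation: if the structure
maps `l, r` of a co-category are jointly epimorphic, there is `s : Q1 ⟶ Q1` with
`s ∘ l = r` and `s ∘ r = l`. -/
theorem copreorder_isCoequivalenceRelation [CoherentCategory E]
    (C : CocatStruct E) (h : C.IsCocategory) (hje : JointlyEpi C.l C.r) :
    ∃ s : C.Q1 ⟶ C.Q1, C.l ≫ s = C.r ∧ C.r ≫ s = C.l := by
  have := h.mono_l
  have := h.mono_r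
  have : Mono (prod.lift C.l C.r) := mono_of_mono_fac (prod.lift_fst C.l C.r)
  have : Mono (prod.lift C.r C.l) := mono_of_mono_fac (prod.lift_fst C.r C.l)
  obtain ⟨G, g, m, n, hg, hm, hn, hG⟩ :=
    exists_jointlyCover (prod.lift C.l C.r) (prod.lift C.r C.l)
  have : Mono m := mono_of_mono_fac hm
  have : Mono n := mono_of_mono_fac hn
  have hm1 : m ≫ g ≫ prod.fst = C.l := by rw [reassoc_of% hm, prod.lift_fst]
  have hn1 : n ≫ g ≫ prod.fst = C.r := by rw [reassoc_of% hn, prod.lift_fst]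
  have hm2 : m ≫ g ≫ prod.snd = C.r := by rw [reassoc_of% hm, prod.lift_snd]
  have hn2 : n ≫ g ≫ prod.snd = C.l := by rw [reassoc_of% hn, prod.lift_snd]
  have hse : StrongEpi (g ≫ prod.fst) := h.jointlyCover_l_r.strongEpi _ m n hm1 hn1
  -- On the overlap of the two pieces of `G`, where `l a = r b`, applying `i` gives `a = b`.
  have overlap : ∀ {S : E} (a b : S ⟶ C.Q0), a ≫ C.l = b ≫ C.r → a ≫ m = b ≫ n := by
    intro S a b hab
    have hab' : a = b := by simpa [h.li, h.ri] using congrArg (· ≫ C.i) hab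
    subst hab'
    rw [← cancel_mono g, Category.assoc, Category.assoc, hm, hn]
    ext <;> simp [hab]
  have separated : ∀ {S : E} (x y : S ⟶ G), ((∃ a, x = a ≫ m) ∨ ∃ a, x = a ≫ n) →
      ((∃ b, y = b ≫ m) ∨ ∃ b, y = b ≫ n) → x ≫ g ≫ prod.fst = y ≫ g ≫ prod.fst → x = y := by
    rintro S x y (⟨a, rfl⟩ | ⟨a, rfl⟩) (⟨b, rfl⟩ | ⟨b, rfl⟩) hxy <;>
      rw [Category.assoc, Category.assoc] at hxy <;> simp only [hm1, hn1] at hxy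
    · rw [(cancel_mono C.l).mp hxy]
    · exact overlap a b hxy
    · exact (overlap b a hxy.symm).symm
    · rw [(cancel_mono C.r).mp hxy]
  have hmono : Mono (g ≫ prod.fst) := by
    refine ⟨fun {T} x y hxy => ?_⟩
    have hxy' : ∀ {S : E} (t : S ⟶ T), (t ≫ x) ≫ g ≫ prod.fst = (t ≫ y) ≫ g ≫ prod.fst := by
      intro S t
      rw [Category.assoc, hxy, Category.assoc]
    have step : ∀ {S : E} (t : S ⟶ T), ((∃ a, t ≫ x = a ≫ m) ∨ ∃ a, t ≫ x = a ≫ n) →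
        t ≫ x = t ≫ y := by
      intro S t hx
      have hx' : ∀ {S' : E} (t' : S' ⟶ S),
          (∃ a, (t' ≫ t) ≫ x = a ≫ m) ∨ ∃ a, (t' ≫ t) ≫ x = a ≫ n := by
        intro S' t'
        rcases hx with ⟨a, ha⟩ | ⟨a, ha⟩
        · exact Or.inl ⟨t' ≫ a, by simp [ha]⟩
        · exact Or.inr ⟨t' ≫ a, by simp [ha]⟩
      refine hG.hom_ext (t ≫ y) _ _ (fun t' b hb => ?_) (fun t' b hb => ?_)
      · rw [← Category.assoc] at hb
        simpa using separated _ _ (hx' t') (Or.inl ⟨b, hb⟩) (hxy' (t' ≫ t))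
      · rw [← Category.assoc] at hb
        simpa using separated _ _ (hx' t') (Or.inr ⟨b, hb⟩) (hxy' (t' ≫ t))
    exact hG.hom_ext x x y (fun t a ha => step t (Or.inl ⟨a, ha⟩))
      (fun t a ha => step t (Or.inr ⟨a, ha⟩))
  have : IsIso (g ≫ prod.fst) := isIso_of_mono_of_strongEpi _
  refine ⟨inv (g ≫ prod.fst) ≫ g ≫ prod.snd, ?_, ?_⟩
  · rw [← hm2]
    nth_rewrite 1 [← hm1]
    simp
  · rw [← hn2]
    nth_rewrite 1 [← hn1]
    simp
end

section
/- In a coherent category E, let f : A → X and g : B → X be monomorphisms whose union, as subobjects of X, is the maximal subobject (all of X). Then the pullback square of f along g (with projections π1 : P → A, π2 : P → B satisfying f∘π1 = g∘π2) is also a pushout square. -/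
/-!
Given `a : A ⟶ Z` and `b : B ⟶ Z` which agree on `P`, the graphs of `a` and `b` are subobjects of
`X ⨯ Z`; let `c` be their union. The projection `c ⟶ X` is a monomorphism: two generalized elements
of `c` over the same element of `X` may be compared locally, where each of them lies in one of the
two graphs, and there they agree because `f`, `g` are monomorphisms and `a`, `b` agree on the
intersection `P`. As `f` and `g` factor through this projection, the hypothesis on the union makes
it an isomorphism, so `c` is the graph of a morphism `X ⟶ Z`, the required one. The local comparison
is `eq_of_union_cover`, where stability of unions under pullback enters; it also gives uniqueness.
-/

open CategoryTheory CategoryTheory.Limits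

universe v u

variable {E : Type u} [Category.{v} E]

theorem exists_comp_eq_of_mk_factors {A X W : E} (f : A ⟶ X) [Mono f] {h : W ⟶ X}
    (H : (Subobject.mk f).Factors h) : ∃ k : W ⟶ A, k ≫ f = h :=
  (Subobject.mk_factors_iff f h).1 H

/-- If `c` is the union of `a` and `b` and `s : T ⟶ Y` factors through `c`, then `T` is covered by
the preimages of `a` and `b`: morphisms out of `T` can be tested for equality there. -/
theorem eq_of_union_cover [CoherentCategory E] {Y T Z : E} {a b c : Subobject Y}
    (hac : a ≤ c) (hbc : b ≤ c) (hc : ∀ d : Subobject Y, a ≤ d → b ≤ d → c ≤ d)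
    (s : T ⟶ Y) (hs : c.Factors s) (u v : T ⟶ Z)
    (ha : ∀ {W : E} (w : W ⟶ T), a.Factors (w ≫ s) → w ≫ u = w ≫ v)
    (hb : ∀ {W : E} (w : W ⟶ T), b.Factors (w ≫ s) → w ≫ u = w ≫ v) : u = v := by
  have key : ∀ x : Subobject Y,
      (∀ {W : E} (w : W ⟶ T), x.Factors (w ≫ s) → w ≫ u = w ≫ v) →
      (Subobject.pullback s).obj x ≤ Subobject.mk (equalizer.ι u v) := by
    intro x hx
    have hxw : x.Factors (((Subobject.pullback s).obj x).arrow ≫ s) := by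
      rw [← (Subobject.isPullback s x).w]
      exact Subobject.factors_comp_arrow _
    refine Subobject.le_mk_of_comm (equalizer.lift _ (hx _ hxw)) ?_
    simp
  have hle := CoherentCategory.union_pullback s a b c hac hbc hc _ (key a ha) (key b hb)
  have hfac : (Subobject.mk (equalizer.ι u v)).Factors (𝟙 T) := by
    refine Subobject.factors_of_le _ hle ?_
    refine (Subobject.factors_iff _ _).2 ⟨?_, ?_⟩
    · exact (Subobject.isPullback s c).lift (c.factorThru s hs) (𝟙 T) (by simp)
    · exact (Subobject.isPullback s c).lift_snd _ _ _
  obtain ⟨k, hk⟩ := exists_comp_eq_of_mk_factors _ hfac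
  rw [← Category.id_comp u, ← Category.id_comp v, ← hk, Category.assoc, Category.assoc,
    equalizer.condition]

/-- In a coherent category, if two monomorphisms `f : A ⟶ X`, `g : B ⟶ X` have union the
maximal subobject of `X`, then their pullback square is also a pushout square. -/
theorem isPushout_of_union_eq_top [CoherentCategory E]
    {A B X P : E} (f : A ⟶ X) (g : B ⟶ X) [Mono f] [Mono g]
    (π1 : P ⟶ A) (π2 : P ⟶ B) (hpb : IsPullback π1 π2 f g)
    (hunion : ∀ d : Subobject X, Subobject.mk f ≤ d → Subobject.mk g ≤ d → d = ⊤) :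
    IsPushout π1 π2 f g := by
  have htop : ∀ d : Subobject X, Subobject.mk f ≤ d → Subobject.mk g ≤ d → ⊤ ≤ d :=
    fun d h1 h2 => (hunion d h1 h2).ge
  -- `f` and `g` are jointly epimorphic.
  have huniq : ∀ {Z : E} (u v : X ⟶ Z), f ≫ u = f ≫ v → g ≫ u = g ≫ v → u = v := by
    intro Z u v h1 h2
    refine eq_of_union_cover le_top le_top htop (𝟙 X) (Subobject.top_factors _) u v ?_ ?_
    · intro W w hw
      obtain ⟨k, hk⟩ := exists_comp_eq_of_mk_factors _ hw
      have hk' : k ≫ f = w := hk.trans (Category.comp_id w)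
      rw [← hk', Category.assoc, Category.assoc, h1]
    · intro W w hw
      obtain ⟨k, hk⟩ := exists_comp_eq_of_mk_factors _ hw
      have hk' : k ≫ g = w := hk.trans (Category.comp_id w)
      rw [← hk', Category.assoc, Category.assoc, h2]
  have hdesc : ∀ {Z : E} (a : A ⟶ Z) (b : B ⟶ Z), π1 ≫ a = π2 ≫ b →
      ∃ d : X ⟶ Z, f ≫ d = a ∧ g ≫ d = b := by
    intro Z a b hab
    have : Mono (prod.lift f a) := mono_of_mono_fac (prod.lift_fst f a)
    have : Mono (prod.lift g b) := mono_of_mono_fac (prod.lift_fst g b)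
    obtain ⟨c, hac, hbc, hc⟩ := CoherentCategory.exists_union
      (Subobject.mk (prod.lift f a)) (Subobject.mk (prod.lift g b))
    have hmixed : ∀ {W : E} (k : W ⟶ A) (l : W ⟶ B), k ≫ f = l ≫ g → k ≫ a = l ≫ b := by
      intro W k l h
      rw [← hpb.lift_fst k l h, Category.assoc, hab, ← Category.assoc, hpb.lift_snd]
    -- Elements of `c` with the same first component are equal: four cases, according to the
    -- graphs in which the two elements lie.
    have hinj : ∀ {T : E} (s t : T ⟶ X ⨯ Z), c.Factors s → c.Factors t →
        s ≫ prod.fst = t ≫ prod.fst → s = t := by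
      intro T s t hs ht hst
      refine eq_of_union_cover hac hbc hc s hs s t ?_ ?_
      · intro W w hw
        obtain ⟨k, hk⟩ := exists_comp_eq_of_mk_factors _ hw
        refine eq_of_union_cover hac hbc hc (w ≫ t) (Subobject.factors_of_factors_right w ht)
          _ _ ?_ ?_
        · intro V r hr
          obtain ⟨l, hl⟩ := exists_comp_eq_of_mk_factors _ hr
          have h1 : (r ≫ k) ≫ f = l ≫ f := by
            have := congrArg (· ≫ prod.fst) hl
            have h2 := congrArg (· ≫ prod.fst) hk
            simp only [Category.assoc, prod.lift_fst] at this h2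
            rw [Category.assoc, h2, this, hst]
          rw [← hl, ← hk, ← (cancel_mono f).1 h1, Category.assoc]
        · intro V r hr
          obtain ⟨l, hl⟩ := exists_comp_eq_of_mk_factors _ hr
          have h1 : (r ≫ k) ≫ f = l ≫ g := by
            have := congrArg (· ≫ prod.fst) hl
            have h2 := congrArg (· ≫ prod.fst) hk
            simp only [Category.assoc, prod.lift_fst] at this h2
            rw [Category.assoc, h2, this, hst]
          have h3 := hmixed _ _ h1
          rw [← hl, ← hk, ← Category.assoc, prod.comp_lift, prod.comp_lift, h1, h3]
      · intro W w hw
        obtain ⟨k, hk⟩ := exists_comp_eq_of_mk_factors _ hw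
        refine eq_of_union_cover hac hbc hc (w ≫ t) (Subobject.factors_of_factors_right w ht)
          _ _ ?_ ?_
        · intro V r hr
          obtain ⟨l, hl⟩ := exists_comp_eq_of_mk_factors _ hr
          have h1 : l ≫ f = (r ≫ k) ≫ g := by
            have := congrArg (· ≫ prod.fst) hl
            have h2 := congrArg (· ≫ prod.fst) hk
            simp only [Category.assoc, prod.lift_fst] at this h2
            rw [Category.assoc, h2, this, hst]
          have h3 := hmixed _ _ h1
          rw [← hl, ← hk, ← Category.assoc, prod.comp_lift, prod.comp_lift, h1, h3]
        · intro V r hr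
          obtain ⟨l, hl⟩ := exists_comp_eq_of_mk_factors _ hr
          have h1 : (r ≫ k) ≫ g = l ≫ g := by
            have := congrArg (· ≫ prod.fst) hl
            have h2 := congrArg (· ≫ prod.fst) hk
            simp only [Category.assoc, prod.lift_fst] at this h2
            rw [Category.assoc, h2, this, hst]
          rw [← hl, ← hk, ← (cancel_mono g).1 h1, Category.assoc]
    let p : (c : E) ⟶ X := c.arrow ≫ prod.fst
    have : Mono p := ⟨fun s t h => by
      refine (cancel_mono c.arrow).1 (hinj _ _ (Subobject.factors_comp_arrow _)
        (Subobject.factors_comp_arrow _) ?_)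
      simpa [p] using h⟩
    have hA : c.Factors (prod.lift f a) :=
      Subobject.factors_of_le _ hac (Subobject.mk_factors_self _)
    have hB : c.Factors (prod.lift g b) :=
      Subobject.factors_of_le _ hbc (Subobject.mk_factors_self _)
    have hAp : c.factorThru _ hA ≫ p = f := by
      rw [← Category.assoc, Subobject.factorThru_arrow, prod.lift_fst]
    have hBp : c.factorThru _ hB ≫ p = g := by
      rw [← Category.assoc, Subobject.factorThru_arrow, prod.lift_fst]
    have : IsIso p := (Subobject.isIso_iff_mk_eq_top p).2
      (hunion _ (Subobject.mk_le_mk_of_comm _ hAp) (Subobject.mk_le_mk_of_comm _ hBp))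
    refine ⟨inv p ≫ c.arrow ≫ prod.snd, ?_, ?_⟩
    · rw [← Category.assoc, (IsIso.comp_inv_eq p).2 hAp.symm, ← Category.assoc,
        Subobject.factorThru_arrow, prod.lift_snd]
    · rw [← Category.assoc, (IsIso.comp_inv_eq p).2 hBp.symm, ← Category.assoc,
        Subobject.factorThru_arrow, prod.lift_snd]
  refine ⟨⟨hpb.w⟩, ⟨PushoutCocone.IsColimit.mk hpb.w
    (fun q => (hdesc q.inl q.inr q.condition).choose)
    (fun q => (hdesc q.inl q.inr q.condition).choose_spec.1)
    (fun q => (hdesc q.inl q.inr q.condition).choose_spec.2)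
    (fun q m h1 h2 => huniq _ _ ?_ ?_)⟩⟩
  · exact h1.trans (hdesc q.inl q.inr q.condition).choose_spec.1.symm
  · exact h2.trans (hdesc q.inl q.inr q.condition).choose_spec.2.symm
end

section
/- Let Q be an internal co-category in a category E whose maps l, r are jointly epimorphic (a co-preorder). Then any morphism s : Q1 → Q1 satisfying s∘l = r and s∘r = l automatically satisfies the co-inverse laws [id, s]∘q = l∘i and [s, id]∘q = r∘i, so that Q is a co-equivalence relation. -/
open CategoryTheory CategoryTheory.Limits

universe v u

variable {E : Type u} [Category.{v} E]

/-- In a co-preorder, any `s : Q1 ⟶ Q1` with `s ∘ l = r` and `s ∘ r = l` automatically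
satisfies the co-inverse laws `[id, s] ∘ q = l ∘ i` and `[s, id] ∘ q = r ∘ i`, so the
co-category is a co-equivalence relation. -/
theorem copreorder_coinverse_laws (C : CocatStruct E) (h : C.IsCocategory)
    (hje : JointlyEpi C.l C.r) (s : C.Q1 ⟶ C.Q1)
    (hsl : C.l ≫ s = C.r) (hsr : C.r ≫ s = C.l) :
    (∀ u : C.Q2 ⟶ C.Q1, C.ν1 ≫ u = 𝟙 C.Q1 → C.ν2 ≫ u = s →
      C.q ≫ u = C.i ≫ C.l) ∧
    (∀ u : C.Q2 ⟶ C.Q1, C.ν1 ≫ u = s → C.ν2 ≫ u = 𝟙 C.Q1 →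
      C.q ≫ u = C.i ≫ C.r) := by
  -- By joint epimorphy both laws may be tested on `l` and `r`, where `q` reduces to `ν1`, `ν2`.
  refine ⟨fun u h1 h2 => hje _ _ ?_ ?_, fun u h1 h2 => hje _ _ ?_ ?_⟩
  · rw [reassoc_of% h.ql, h1, reassoc_of% h.li, Category.comp_id]
  · rw [reassoc_of% h.qr, h2, reassoc_of% h.ri, hsr]
  · rw [reassoc_of% h.ql, h1, reassoc_of% h.li, hsl]
  · rw [reassoc_of% h.qr, h2, reassoc_of% h.ri, Category.comp_id]
end

section
/- In a coherent category E, every internal co-category Q is (up to the evident identification) the cokernel pair of a monomorphism: letting P be the pullback of l along r, with equal projections π := π1 = π2 : P → Q0, the projection π is a monomorphism, l∘π = r∘π, and the square with both legs π : P → Q0 and cocone l, r : Q0 → Q1 is a pushout, i.e., (Q1, l, r) is the cokernel pair of π. -/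
/-!
The heart of the matter is that `l` and `r` jointly cover `Q1`. Both coprojections `ν1, ν2` are
split monomorphisms, and being a pushout cocone they jointly cover `Q2`; pulling this cover back
along `q` covers `Q1`. On the part where `q x = ν1 y`, the left co-unit law gives `x = l (i y)`;
where `q x = ν2 y`, the right one gives `x = r (i y)` (`cocat_cover`).

The rest is the general fact that, in a coherent category, two subobjects `a, b` covering `X` form
a pushout square over their intersection (`cover_desc`). Given `f, g` agreeing on the intersection,
the union in `X ⨯ Z` of their graphs is itself the graph of a morphism `X ⟶ Z`: its projection to
`X` is monic by stability of unions, and it contains `a` and `b`, hence is invertible.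

The two projections of the pullback of `l` and `r` agree because `i` retracts both `l` and `r`.
-/

open CategoryTheory CategoryTheory.Limits

universe v u

variable {E : Type u} [Category.{v} E]

/-- Local character of unions: if `w : T ⟶ X` lands in the union `c` of `a` and `b`, a subobject of
`T` that contains every generalized element sent by `w` into `a` or into `b` is everything. -/
lemma lub_ind [CoherentCategory E] {X T : E} {a b c : Subobject X}
    (ha : a ≤ c) (hb : b ≤ c) (hc : ∀ d : Subobject X, a ≤ d → b ≤ d → c ≤ d)
    (w : T ⟶ X) (hw : c.Factors w) (d : Subobject T)
    (Ha : ∀ {S : E} (t : S ⟶ T), a.Factors (t ≫ w) → d.Factors t)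
    (Hb : ∀ {S : E} (t : S ⟶ T), b.Factors (t ≫ w) → d.Factors t) :
    d.Factors (𝟙 T) := by
  have key : ∀ x : Subobject X,
      (∀ {S : E} (t : S ⟶ T), x.Factors (t ≫ w) → d.Factors t) →
      (Subobject.pullback w).obj x ≤ d := by
    intro x H
    have hx := Subobject.factors_comp_arrow (P := x) (Subobject.pullbackπ w x)
    rw [(Subobject.isPullback w x).w] at hx
    have hd := H ((Subobject.pullback w).obj x).arrow hx
    exact Subobject.le_of_comm (d.factorThru _ hd) (d.factorThru_arrow _ hd)
  have hle := CoherentCategory.union_pullback w a b c ha hb hc d (key a Ha) (key b Hb)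
  have hT : ((Subobject.pullback w).obj c).Factors (𝟙 T) := by
    have := Subobject.factors_comp_arrow (P := (Subobject.pullback w).obj c)
      ((Subobject.isPullback w c).lift (c.factorThru w hw) (𝟙 T) (by simp))
    rwa [(Subobject.isPullback w c).lift_snd] at this
  exact Subobject.factors_of_le _ hle hT

lemma exists_of_mk_factors {A X S : E} {a : A ⟶ X} [Mono a] {s : S ⟶ X}
    (h : (Subobject.mk a).Factors s) : ∃ t : S ⟶ A, t ≫ a = s :=
  (Subobject.mk_factors_iff _ _).1 h

/-- Morphisms out of `T` are equal as soon as they agree on the two parts of a cover of `T` that is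
induced by a union. -/
lemma lub_hom_ext [CoherentCategory E] {X T Y : E} {a b c : Subobject X}
    (ha : a ≤ c) (hb : b ≤ c) (hc : ∀ d : Subobject X, a ≤ d → b ≤ d → c ≤ d)
    (w : T ⟶ X) (hw : c.Factors w) (u v : T ⟶ Y)
    (Ha : ∀ {S : E} (t : S ⟶ T), a.Factors (t ≫ w) → t ≫ u = t ≫ v)
    (Hb : ∀ {S : E} (t : S ⟶ T), b.Factors (t ≫ w) → t ≫ u = t ≫ v) : u = v := by
  have aux : ∀ {S : E} (t : S ⟶ T), t ≫ u = t ≫ v →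
      (Subobject.mk (equalizer.ι u v)).Factors t := fun t ht =>
    (Subobject.mk_factors_iff _ _).2 ⟨equalizer.lift t ht, equalizer.lift_ι _ _⟩
  obtain ⟨s, hs⟩ := exists_of_mk_factors <|
    lub_ind ha hb hc w hw (Subobject.mk (equalizer.ι u v))
      (fun t h => aux t (Ha t h)) (fun t h => aux t (Hb t h))
  rw [← Category.id_comp u, ← Category.id_comp v, ← hs, Category.assoc, Category.assoc,
    equalizer.condition]

/-- The monomorphisms `a` and `b` jointly cover `X`: the union of their subobjects is `⊤`. -/
def IsCover {A B X : E} (a : A ⟶ X) (b : B ⟶ X) [Mono a] [Mono b] : Prop :=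
  ∀ d : Subobject X, Subobject.mk a ≤ d → Subobject.mk b ≤ d → ⊤ ≤ d

lemma mk_factors_comp {A X S : E} (a : A ⟶ X) [Mono a] (s : S ⟶ A) :
    (Subobject.mk a).Factors (s ≫ a) :=
  (Subobject.mk_factors_iff _ _).2 ⟨s, rfl⟩

lemma factors_of_mk_le {A X : E} (a : A ⟶ X) [Mono a] {d : Subobject X}
    (h : Subobject.mk a ≤ d) : d.Factors a :=
  Subobject.factors_of_le _ h (by simpa using mk_factors_comp a (𝟙 A))

lemma mk_le_of_factors {A X : E} (a : A ⟶ X) [Mono a] {d : Subobject X}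
    (h : d.Factors a) : Subobject.mk a ≤ d :=
  Subobject.mk_le_of_comm (d.factorThru a h) (d.factorThru_arrow a h)

lemma IsCover.hom_ext [CoherentCategory E] {A B X : E} {a : A ⟶ X} {b : B ⟶ X} [Mono a] [Mono b]
    (hcov : IsCover a b) {T Y : E} (w : T ⟶ X) (u v : T ⟶ Y)
    (Ha : ∀ {S : E} (t : S ⟶ T) (s : S ⟶ A), t ≫ w = s ≫ a → t ≫ u = t ≫ v)
    (Hb : ∀ {S : E} (t : S ⟶ T) (s : S ⟶ B), t ≫ w = s ≫ b → t ≫ u = t ≫ v) : u = v := by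
  refine lub_hom_ext (a := Subobject.mk a) (b := Subobject.mk b) le_top le_top hcov w
    (Subobject.top_factors _) u v (fun t ht => ?_) (fun t ht => ?_)
  · obtain ⟨s, hs⟩ := exists_of_mk_factors ht
    exact Ha t s hs.symm
  · obtain ⟨s, hs⟩ := exists_of_mk_factors ht
    exact Hb t s hs.symm

/-- A covering pair of subobjects has the existence part of the universal property of the pushout
over the intersection. The intersection enters through its generalized elements: `hfg` says that
`f` and `g` agree on it. -/
lemma cover_desc [CoherentCategory E] {A B X Z : E} {a : A ⟶ X} {b : B ⟶ X} [Mono a] [Mono b]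
    (hcov : IsCover a b) (f : A ⟶ Z) (g : B ⟶ Z)
    (hfg : ∀ {S : E} (s : S ⟶ A) (t : S ⟶ B), s ≫ a = t ≫ b → s ≫ f = t ≫ g) :
    ∃ k : X ⟶ Z, a ≫ k = f ∧ b ≫ k = g := by
  let F : A ⟶ X ⨯ Z := prod.lift a f
  let G : B ⟶ X ⨯ Z := prod.lift b g
  have hF1 : F ≫ prod.fst = a := prod.lift_fst _ _
  have hF2 : F ≫ prod.snd = f := prod.lift_snd _ _
  have hG1 : G ≫ prod.fst = b := prod.lift_fst _ _
  have hG2 : G ≫ prod.snd = g := prod.lift_snd _ _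
  have : Mono F := mono_of_mono_fac hF1
  have : Mono G := mono_of_mono_fac hG1
  obtain ⟨c, hFc, hGc, hc⟩ := CoherentCategory.exists_union (Subobject.mk F) (Subobject.mk G)
  -- Over `a`, the union of the graphs coincides with the graph of `f`, and likewise over `b`.
  have overA : ∀ {T : E} (u : T ⟶ X ⨯ Z) (z : T ⟶ A), c.Factors u → u ≫ prod.fst = z ≫ a →
      u = z ≫ F := by
    intro T u z hu hz
    refine lub_hom_ext hFc hGc hc u hu u (z ≫ F) (fun t ht => ?_) (fun t ht => ?_)
    · obtain ⟨x, hx⟩ := exists_of_mk_factors ht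
      have : x = t ≫ z := by
        rw [← cancel_mono a, Category.assoc, ← hz, ← Category.assoc, ← hx, Category.assoc, hF1]
      rw [← hx, this, Category.assoc]
    · obtain ⟨y, hy⟩ := exists_of_mk_factors ht
      have e : (t ≫ z) ≫ a = y ≫ b := by
        rw [Category.assoc, ← hz, ← Category.assoc, ← hy, Category.assoc, hG1]
      have e' := hfg _ _ e
      rw [← hy]
      apply Limits.prod.hom_ext
      · rw [Category.assoc, hG1, Category.assoc, Category.assoc, hF1, ← e, Category.assoc]
      · rw [Category.assoc, hG2, Category.assoc, Category.assoc, hF2, ← e', Category.assoc]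
  have overB : ∀ {T : E} (u : T ⟶ X ⨯ Z) (z : T ⟶ B), c.Factors u → u ≫ prod.fst = z ≫ b →
      u = z ≫ G := by
    intro T u z hu hz
    refine lub_hom_ext hFc hGc hc u hu u (z ≫ G) (fun t ht => ?_) (fun t ht => ?_)
    · obtain ⟨y, hy⟩ := exists_of_mk_factors ht
      have e : y ≫ a = (t ≫ z) ≫ b := by
        rw [Category.assoc, ← hz, ← Category.assoc, ← hy, Category.assoc, hF1]
      have e' := hfg _ _ e
      rw [← hy]
      apply Limits.prod.hom_ext
      · rw [Category.assoc, hF1, Category.assoc, Category.assoc, hG1, e, Category.assoc]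
      · rw [Category.assoc, hF2, Category.assoc, Category.assoc, hG2, e', Category.assoc]
    · obtain ⟨x, hx⟩ := exists_of_mk_factors ht
      have : x = t ≫ z := by
        rw [← cancel_mono b, Category.assoc, ← hz, ← Category.assoc, ← hx, Category.assoc, hG1]
      rw [← hx, this, Category.assoc]
  let p : (c : E) ⟶ X := c.arrow ≫ prod.fst
  have hfac : ∀ {T : E} (u : T ⟶ (c : E)), c.Factors (u ≫ c.arrow) := fun u =>
    Subobject.factors_comp_arrow u
  have hp : Mono p := by
    constructor
    intro T u v huv
    rw [← cancel_mono c.arrow]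
    have huv' : (u ≫ c.arrow) ≫ prod.fst = (v ≫ c.arrow) ≫ prod.fst := by
      simpa [p] using huv
    refine hcov.hom_ext ((u ≫ c.arrow) ≫ prod.fst) _ _ (fun t s e => ?_) (fun t s e => ?_)
    · rw [← Category.assoc, ← Category.assoc t v,
        overA ((t ≫ u) ≫ c.arrow) s (hfac _) (by simpa using e),
        overA ((t ≫ v) ≫ c.arrow) s (hfac _) (by rw [huv'] at e; simpa using e)]
    · rw [← Category.assoc, ← Category.assoc t v,
        overB ((t ≫ u) ≫ c.arrow) s (hfac _) (by simpa using e),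
        overB ((t ≫ v) ≫ c.arrow) s (hfac _) (by rw [huv'] at e; simpa using e)]
  have fF := factors_of_mk_le F hFc
  have fG := factors_of_mk_le G hGc
  have hap : c.factorThru F fF ≫ p = a := by
    simp only [p, Subobject.factorThru_arrow_assoc, hF1]
  have hbp : c.factorThru G fG ≫ p = b := by
    simp only [p, Subobject.factorThru_arrow_assoc, hG1]
  have htop := hcov (Subobject.mk p)
    (mk_le_of_factors a (by rw [← hap]; exact mk_factors_comp p _))
    (mk_le_of_factors b (by rw [← hbp]; exact mk_factors_comp p _))
  obtain ⟨s, hs⟩ := exists_of_mk_factors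
    (Subobject.factors_of_le (𝟙 X) htop (Subobject.top_factors _))
  have hsa : a ≫ s = c.factorThru F fF := by
    rw [← cancel_mono p, Category.assoc, hs, hap, Category.comp_id]
  have hsb : b ≫ s = c.factorThru G fG := by
    rw [← cancel_mono p, Category.assoc, hs, hbp, Category.comp_id]
  refine ⟨s ≫ c.arrow ≫ prod.snd, ?_, ?_⟩
  · rw [← Category.assoc, hsa, Subobject.factorThru_arrow_assoc, hF2]
  · rw [← Category.assoc, hsb, Subobject.factorThru_arrow_assoc, hG2]

/-- The two legs of a pushout cocone jointly cover, when they are monic. -/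
lemma IsPushout.isCover {W A B X : E} {f : W ⟶ A} {g : W ⟶ B} {a : A ⟶ X} {b : B ⟶ X}
    [Mono a] [Mono b] (h : IsPushout f g a b) : IsCover a b := by
  intro d hda hdb
  have fa := factors_of_mk_le a hda
  have fb := factors_of_mk_le b hdb
  have w : f ≫ d.factorThru a fa = g ≫ d.factorThru b fb := by
    rw [← cancel_mono d.arrow]
    simpa using h.w
  have hs : h.desc _ _ w ≫ d.arrow = 𝟙 X := by
    apply h.hom_ext <;> simp
  exact Subobject.le_of_comm ((⊤ : Subobject X).arrow ≫ h.desc _ _ w) (by simp [hs])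

/-- In a co-category, the two co-endpoint inclusions `l` and `r` jointly cover `Q1`. -/
lemma cocat_cover [CoherentCategory E] (C : CocatStruct E) (h : C.IsCocategory)
    [Mono C.l] [Mono C.r] : IsCover C.l C.r := by
  intro d hl hr
  have w1 : C.r ≫ C.i ≫ C.l = C.l ≫ 𝟙 C.Q1 := by
    rw [← Category.assoc, h.ri, Category.id_comp, Category.comp_id]
  have w2 : C.r ≫ 𝟙 C.Q1 = C.l ≫ C.i ≫ C.r := by
    rw [← Category.assoc, h.li, Category.id_comp, Category.comp_id]
  have q1 := h.counit_left (h.po.desc _ _ w1) (h.po.inl_desc _ _ w1) (h.po.inr_desc _ _ w1)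
  have q2 := h.counit_right (h.po.desc _ _ w2) (h.po.inl_desc _ _ w2) (h.po.inr_desc _ _ w2)
  have : Mono C.ν1 := mono_of_mono_fac (h.po.inl_desc _ _ w2)
  have : Mono C.ν2 := mono_of_mono_fac (h.po.inr_desc _ _ w1)
  have fl := factors_of_mk_le _ hl
  have fr := factors_of_mk_le _ hr
  have hd := lub_ind (a := Subobject.mk C.ν1) (b := Subobject.mk C.ν2) le_top le_top
    (IsPushout.isCover h.po) C.q (Subobject.top_factors _) d
    (fun t ht => by
      obtain ⟨y, hy⟩ := exists_of_mk_factors ht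
      have e : t = (y ≫ C.i) ≫ C.l := by
        rw [← Category.comp_id t, ← q1, ← Category.assoc, ← hy, Category.assoc,
          h.po.inl_desc, Category.assoc]
      rw [e]
      exact Subobject.factors_of_factors_right _ fl)
    (fun t ht => by
      obtain ⟨y, hy⟩ := exists_of_mk_factors ht
      have e : t = (y ≫ C.i) ≫ C.r := by
        rw [← Category.comp_id t, ← q2, ← Category.assoc, ← hy, Category.assoc,
          h.po.inr_desc, Category.assoc]
      rw [e]
      exact Subobject.factors_of_factors_right _ fr)
  exact Subobject.le_of_comm ((⊤ : Subobject C.Q1).arrow ≫ d.factorThru _ hd) (by simp)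

/-- In a coherent category, every internal co-category is the cokernel pair of a
monomorphism: with `P` the pullback of `l` along `r`, the two projections agree, the common
projection `π = π1` is a monomorphism with `l ∘ π = r ∘ π`, and `(Q1, l, r)` is the
cokernel pair (pushout with itself) of `π`. -/
theorem cocategory_isCokernelPair [CoherentCategory E]
    (C : CocatStruct E) (h : C.IsCocategory)
    {P : E} (π1 π2 : P ⟶ C.Q0) (hpb : IsPullback π1 π2 C.l C.r) :
    π1 = π2 ∧ Mono π1 ∧ π1 ≫ C.l = π1 ≫ C.r ∧ IsPushout π1 π1 C.l C.r := by
  have : Mono C.l := mono_of_mono_fac h.li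
  have : Mono C.r := mono_of_mono_fac h.ri
  have hπ : π1 = π2 := by
    have := hpb.w =≫ C.i
    simpa [h.li, h.ri] using this
  subst hπ
  have hcov := cocat_cover C h
  refine ⟨rfl, ⟨fun u v e => hpb.hom_ext e e⟩, hpb.w, ⟨⟨hpb.w⟩, ⟨?_⟩⟩⟩
  have ex : ∀ s : PushoutCocone π1 π1, ∃ k : C.Q1 ⟶ s.pt, C.l ≫ k = s.inl ∧ C.r ≫ k = s.inr := by
    intro s
    refine cover_desc hcov s.inl s.inr (fun x y e => ?_)
    have e1 := hpb.lift_fst x y e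
    have e2 := hpb.lift_snd x y e
    have c := hpb.lift x y e ≫= s.condition
    calc x ≫ s.inl = hpb.lift x y e ≫ π1 ≫ s.inl := by rw [← Category.assoc, e1]
      _ = hpb.lift x y e ≫ π1 ≫ s.inr := c
      _ = y ≫ s.inr := by rw [← Category.assoc, e2]
  choose k hk1 hk2 using ex
  refine PushoutCocone.IsColimit.mk _ k hk1 hk2 (fun s m hm1 hm2 => ?_)
  refine hcov.hom_ext (𝟙 _) _ _ (fun t z e => ?_) (fun t z e => ?_)
  · rw [Category.comp_id] at e
    rw [e, Category.assoc, Category.assoc, hm1, hk1]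
  · rw [Category.comp_id] at e
    rw [e, Category.assoc, Category.assoc, hm2, hk2]
end
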